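/- arXiv:1510.02421 — 3 statements merged into one kernel-verified Lean document; each statement's English description precedes it below -/
import Mathlib

section
/- If t ≥ 2 is even and n ≥ 3, then M(P_t × K_n) = Z(P_t × K_n) = (n−2)t, where P_t is the path on t vertices and K_n is the complete graph on n vertices. -/
namespace PaperPD

open SimpleGraph

variable {V α β : Type*}

/-- Vertices that eventually become blue in the standard zero forcing process
starting from the blue set `B`. -/
inductive ZFClosure (G : SimpleGraph V) (B : Set V) : V → Prop
  | init (v : V) (hv : v ∈ B) : ZFClosure G B v
  | force (u w : V) (hu : ZFClosure G B u) (huw : G.Adj u w)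
      (h : ∀ x, G.Adj u x → x ≠ w → ZFClosure G B x) : ZFClosure G B w

/-- `B` is a zero forcing set of `G`. -/
def IsZeroForcingSet (G : SimpleGraph V) (B : Set V) : Prop :=
  ∀ v, ZFClosure G B v

/-- The zero forcing number `Z(G)`. -/
noncomputable def zeroForcingNumber (G : SimpleGraph V) [Fintype V] : ℕ :=
  sInf {k | ∃ B : Finset V, B.card = k ∧ IsZeroForcingSet G ↑B}

/-- Vertices that eventually become blue in the skew zero forcing process
starting from the blue set `B` (the forcing vertex need not be blue). -/
inductive SkewZFClosure (G : SimpleGraph V) (B : Set V) : V → Prop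
  | init (v : V) (hv : v ∈ B) : SkewZFClosure G B v
  | force (u w : V) (huw : G.Adj u w)
      (h : ∀ x, G.Adj u x → x ≠ w → SkewZFClosure G B x) : SkewZFClosure G B w

/-- `B` is a skew zero forcing set of `G`. -/
def IsSkewZeroForcingSet (G : SimpleGraph V) (B : Set V) : Prop :=
  ∀ v, SkewZFClosure G B v

/-- The skew zero forcing number `Z⁻(G)`. -/
noncomputable def skewZeroForcingNumber (G : SimpleGraph V) [Fintype V] : ℕ :=
  sInf {k | ∃ B : Finset V, B.card = k ∧ IsSkewZeroForcingSet G ↑B}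

/-- The closed neighborhood `N[S]` of a set of vertices. -/
def closedNbhd (G : SimpleGraph V) (S : Set V) : Set V :=
  S ∪ {v | ∃ u ∈ S, G.Adj u v}

/-- `S` is a power dominating set of `G`, i.e. `N[S]` is a zero forcing set. -/
def IsPowerDominatingSet (G : SimpleGraph V) (S : Set V) : Prop :=
  IsZeroForcingSet G (closedNbhd G S)

/-- The power domination number `γ_P(G)`. -/
noncomputable def powerDominationNumber (G : SimpleGraph V) [Fintype V] : ℕ :=
  sInf {k | ∃ S : Finset V, S.card = k ∧ IsPowerDominatingSet G ↑S}

/-- `S` is a dominating set of `G` (`N[S] = V`). -/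
def IsDominatingSet (G : SimpleGraph V) (S : Set V) : Prop :=
  ∀ v, v ∈ closedNbhd G S

/-- The domination number `γ(G)`. -/
noncomputable def dominationNumber (G : SimpleGraph V) [Fintype V] : ℕ :=
  sInf {k | ∃ S : Finset V, S.card = k ∧ IsDominatingSet G ↑S}

/-- `S` is a total dominating set of `G` (`N(S) = V`). -/
def IsTotalDominatingSet (G : SimpleGraph V) (S : Set V) : Prop :=
  ∀ v, ∃ u ∈ S, G.Adj u v

/-- The total domination number `γ_t(G)`. -/
noncomputable def totalDominationNumber (G : SimpleGraph V) [Fintype V] : ℕ :=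
  sInf {k | ∃ S : Finset V, S.card = k ∧ IsTotalDominatingSet G ↑S}

/-- The degree of a vertex. -/
noncomputable def deg (G : SimpleGraph V) (v : V) : ℕ :=
  (G.neighborSet v).ncard

/-- The maximum degree `Δ(G)`. -/
noncomputable def maxDeg (G : SimpleGraph V) [Fintype V] : ℕ :=
  Finset.univ.sup fun v => deg G v

/-- `A` is a symmetric real matrix whose off-diagonal nonzero pattern is
described by the graph `G`, i.e. `A ∈ S(G)`. -/
def MatrixOfGraph (G : SimpleGraph V) (A : Matrix V V ℝ) : Prop :=
  A.IsSymm ∧ ∀ i j, i ≠ j → (A i j ≠ 0 ↔ G.Adj i j)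

/-- The nullity of a square real matrix. -/
noncomputable def nullity [Fintype V] [DecidableEq V] (A : Matrix V V ℝ) : ℕ :=
  Fintype.card V - A.rank

/-- The maximum nullity `M(G)`. -/
noncomputable def maxNullity (G : SimpleGraph V) [Fintype V] [DecidableEq V] : ℕ :=
  sSup {k | ∃ A : Matrix V V ℝ, MatrixOfGraph G A ∧ nullity A = k}

/-- The tensor (direct) product of two simple graphs. -/
def tensorProd (G : SimpleGraph α) (H : SimpleGraph β) : SimpleGraph (α × β) where
  Adj p q := G.Adj p.1 q.1 ∧ H.Adj p.2 q.2
  symm := ⟨fun _ _ h => ⟨h.1.symm, h.2.symm⟩⟩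
  loopless := ⟨fun p h => G.loopless.irrefl p.1 h.1⟩

/-- The lexicographic product of two simple graphs. -/
def lexProd (G : SimpleGraph α) (H : SimpleGraph β) : SimpleGraph (α × β) where
  Adj p q := G.Adj p.1 q.1 ∨ (p.1 = q.1 ∧ H.Adj p.2 q.2)
  symm := ⟨fun _ _ h => h.elim (fun h' => Or.inl h'.symm) (fun h' => Or.inr ⟨h'.1.symm, h'.2.symm⟩)⟩
  loopless := ⟨fun p h => h.elim (fun h' => G.loopless.irrefl p.1 h') (fun h' => H.loopless.irrefl p.2 h'.2)⟩


/-!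
Every zero forcing set `B` of `G` satisfies `M(G) ≤ |B|`: a kernel vector of a matrix in `S(G)`
that vanishes on `B` is forced to vanish everywhere, so restricting the kernel to `B` is injective.

For any graph `G`, the Kronecker product of a skew-symmetric matrix with the pattern of `G` and the
skew-symmetric matrix `(f x - f y)`, `f` injective, lies in `S(G × K_n)`. The second factor has
rank at most `2`, so the nullity is at least `(n - 2)|G|`.

For the matching upper bound let `G` be bipartite and leave white two vertices in each fibre
`{v} × K_n`: one with a common label `o`, and one with the label of the colour of `v`. All
neighbours of `u` have the same colour, opposite to that of `u`. Hence whenever `u` forces `w` in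
the skew process on `G`, the blue vertex over `u` labelled by the colour of `w` forces `(w, o)`.
Once all the vertices `(v, o)` are blue, a second run of the skew process, with `(u, o)` forcing,
colours everything. So skew zero forcing from `∅` on `G` gives `Z(G × K_n) ≤ (n - 2)|G|`, and an
even path admits it: even vertices force rightwards and odd vertices force leftwards.
-/

section MaxNullity

variable [Fintype V] {G : SimpleGraph V} {A : Matrix V V ℝ}

theorem ZFClosure.apply_eq_zero_of_mulVec_eq_zero {B : Set V} {x : V → ℝ} {v : V}
    (hv : ZFClosure G B v) (hA : MatrixOfGraph G A) (hx : A.mulVec x = 0)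
    (hB : ∀ u ∈ B, x u = 0) : x v = 0 := by
  induction hv with
  | init u hu => exact hB u hu
  | force u w _ huw _ hxu hxN =>
    have other_terms (y : V) (hyw : y ≠ w) : A u y * x y = 0 := by
      rcases eq_or_ne u y with rfl | huy
      · rw [hxu, mul_zero]
      · by_cases hadj : G.Adj u y
        · rw [hxN y hadj hyw, mul_zero]
        · rw [not_not.mp (mt (hA.2 u y huy).mp hadj), zero_mul]
    have hAw : A u w * x w = 0 := calc
      A u w * x w = ∑ y, A u y * x y := (Fintype.sum_eq_single w other_terms).symm
      _ = 0 := congrFun hx u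
    exact (mul_eq_zero.mp hAw).resolve_left ((hA.2 u w huw.ne).mpr huw)

theorem exists_card_eq_zeroForcingNumber (G : SimpleGraph V) :
    ∃ B : Finset V, B.card = zeroForcingNumber G ∧ IsZeroForcingSet G (B : Set V) :=
  Nat.sInf_mem (s := {k | ∃ B : Finset V, B.card = k ∧ IsZeroForcingSet G (B : Set V)})
    ⟨_, Finset.univ, rfl, fun v ↦ .init v (by simp)⟩

variable [DecidableEq V]

theorem nullity_eq_finrank_ker (A : Matrix V V ℝ) :
    nullity A = Module.finrank ℝ (LinearMap.ker A.mulVecLin) := by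
  have h := A.mulVecLin.finrank_range_add_finrank_ker
  rw [Module.finrank_fintype_fun_eq_card] at h
  exact Nat.sub_eq_of_eq_add' h.symm

theorem nullity_le_card_of_isZeroForcingSet (hA : MatrixOfGraph G A) {B : Finset V}
    (hB : IsZeroForcingSet G (B : Set V)) : nullity A ≤ B.card := by
  let restrict : LinearMap.ker A.mulVecLin →ₗ[ℝ] (B → ℝ) :=
    LinearMap.funLeft ℝ ℝ (Subtype.val : B → V) ∘ₗ Submodule.subtype _
  have restrict_injective : Function.Injective restrict := by
    rw [injective_iff_map_eq_zero]
    rintro ⟨x, hx⟩ hxB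
    ext v
    exact (hB v).apply_eq_zero_of_mulVec_eq_zero hA hx fun u hu ↦ congrFun hxB ⟨u, hu⟩
  calc nullity A = Module.finrank ℝ (LinearMap.ker A.mulVecLin) := nullity_eq_finrank_ker A
    _ ≤ Module.finrank ℝ (B → ℝ) := LinearMap.finrank_le_finrank_of_injective restrict_injective
    _ = B.card := by simp

theorem nullity_le_maxNullity (hA : MatrixOfGraph G A) : nullity A ≤ maxNullity G := by
  refine le_csSup ⟨Fintype.card V, ?_⟩ ⟨A, hA, rfl⟩
  rintro _ ⟨A', -, rfl⟩
  exact Nat.sub_le _ _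

theorem maxNullity_le_zeroForcingNumber (G : SimpleGraph V) :
    maxNullity G ≤ zeroForcingNumber G := by
  obtain ⟨B, hcard, hB⟩ := exists_card_eq_zeroForcingNumber G
  refine csSup_le' ?_
  rintro _ ⟨A, hA, rfl⟩
  exact hcard ▸ nullity_le_card_of_isZeroForcingSet hA hB

end MaxNullity

section KroneckerProduct

open Matrix Kronecker

theorem rank_kronecker_mul_le {R l m n k : Type*} [CommSemiring R] [StrongRankCondition R]
    [Fintype m] [Fintype n] [Fintype k] (A : Matrix l m R) (P : Matrix n k R) (Q : Matrix k n R) :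
    (A ⊗ₖ (P * Q)).rank ≤ Fintype.card m * Fintype.card k := by
  classical
  calc (A ⊗ₖ (P * Q)).rank = ((A ⊗ₖ P) * ((1 : Matrix m m R) ⊗ₖ Q)).rank := by
        rw [← mul_kronecker_mul, Matrix.mul_one]
    _ ≤ (A ⊗ₖ P).rank := rank_mul_le_left _ _
    _ ≤ Fintype.card (m × k) := rank_le_card_width _
    _ = Fintype.card m * Fintype.card k := Fintype.card_prod m k

theorem matrixOfGraph_kronecker {G : SimpleGraph α} {H : SimpleGraph β} {S : Matrix α α ℝ}
    {T : Matrix β β ℝ} (hS : Sᵀ = -S) (hT : Tᵀ = -T) (hSG : ∀ i j, S i j ≠ 0 ↔ G.Adj i j)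
    (hTH : ∀ x y, T x y ≠ 0 ↔ H.Adj x y) : MatrixOfGraph (tensorProd G H) (S ⊗ₖ T) := by
  constructor
  · rw [Matrix.IsSymm, ← kroneckerMap_transpose, hS, hT]
    ext p q
    simp only [kroneckerMap_apply, Matrix.neg_apply, neg_mul_neg]
  · intro p q _
    simp only [kroneckerMap_apply, mul_ne_zero_iff, hSG, hTH, tensorProd]

open Classical in
/-- The skew-symmetric matrix with entries `f i - f j` at the edges of `G` and `0` elsewhere.
With `f` injective it is a skew-symmetric realization of the pattern of `G`. -/
noncomputable def differenceMatrix (G : SimpleGraph V) (f : V → ℝ) : Matrix V V ℝ :=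
  .of fun i j ↦ if G.Adj i j then f i - f j else 0

theorem transpose_differenceMatrix (G : SimpleGraph V) (f : V → ℝ) :
    (differenceMatrix G f)ᵀ = -differenceMatrix G f := by
  ext i j
  by_cases hij : G.Adj i j
  · simp [differenceMatrix, hij, hij.symm]
  · simp [differenceMatrix, hij, G.adj_comm j i]

theorem differenceMatrix_apply_ne_zero_iff (G : SimpleGraph V) {f : V → ℝ}
    (hf : Function.Injective f) (i j : V) : differenceMatrix G f i j ≠ 0 ↔ G.Adj i j := by
  simp only [differenceMatrix, of_apply, ne_eq, ite_eq_right_iff, sub_eq_zero, hf.eq_iff]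
  exact ⟨fun h ↦ by_contra fun hij ↦ h (absurd · hij), fun hij h ↦ hij.ne (h hij)⟩

theorem differenceMatrix_top_eq_mul (f : V → ℝ) :
    differenceMatrix ⊤ f =
      (.of fun i ↦ ![f i, -1] : Matrix V (Fin 2) ℝ) *
        (.of ![fun _ ↦ 1, f] : Matrix (Fin 2) V ℝ) := by
  ext i j
  rcases eq_or_ne i j with rfl | hij
  · simp [differenceMatrix, Matrix.mul_apply]
  · simp [differenceMatrix, Matrix.mul_apply, hij, sub_eq_add_neg]

theorem exists_injective_real (V : Type*) [Finite V] : ∃ f : V → ℝ, Function.Injective f :=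
  have ⟨f, hf⟩ := Countable.exists_injective_nat V
  ⟨fun v ↦ (f v : ℝ), Nat.cast_injective.comp hf⟩

theorem le_maxNullity_tensorProd_top [Fintype V] [DecidableEq V] [Fintype β] [DecidableEq β]
    (G : SimpleGraph V) :
    (Fintype.card β - 2) * Fintype.card V ≤ maxNullity (tensorProd G (⊤ : SimpleGraph β)) := by
  obtain ⟨f, hf⟩ := exists_injective_real V
  obtain ⟨g, hg⟩ := exists_injective_real β
  let A := differenceMatrix G f ⊗ₖ differenceMatrix (⊤ : SimpleGraph β) g
  have hA : MatrixOfGraph (tensorProd G ⊤) A :=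
    matrixOfGraph_kronecker (transpose_differenceMatrix _ _) (transpose_differenceMatrix _ _)
      (differenceMatrix_apply_ne_zero_iff _ hf) (differenceMatrix_apply_ne_zero_iff _ hg)
  have hrank : A.rank ≤ Fintype.card V * 2 := by
    unfold A
    rw [differenceMatrix_top_eq_mul]
    exact rank_kronecker_mul_le _ _ _
  calc (Fintype.card β - 2) * Fintype.card V
      = Fintype.card (V × β) - Fintype.card V * 2 := by
        rw [Fintype.card_prod, ← Nat.mul_sub, mul_comm]
    _ ≤ nullity A := Nat.sub_le_sub_left hrank _
    _ ≤ maxNullity (tensorProd G ⊤) := nullity_le_maxNullity hA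

end KroneckerProduct

section BipartiteUpperBound

variable {G : SimpleGraph V} {S : Set V} {C : G.Coloring Bool} {a : Option Bool ↪ β}

/-- The initial blue set in `G × K_β` obtained from a blue set `S` of the skew process on `G`:
it omits, over each `v ∉ S`, the vertices labelled `a none` (the common label) and
`a (some (C v))` (the label of the colour of `v`). -/
def liftedBlueSet (S : Set V) (C : G.Coloring Bool) (a : Option Bool ↪ β) : Set (V × β) :=
  {p | p.1 ∈ S ∨ (p.2 ≠ a none ∧ p.2 ≠ a (some (C p.1)))}

theorem SkewZFClosure.zfClosure_common_label {v : V} (hv : SkewZFClosure G S v) :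
    ZFClosure (tensorProd G (⊤ : SimpleGraph β)) (liftedBlueSet S C a) (v, a none) := by
  induction hv with
  | init v hv => exact .init _ (.inl hv)
  | force u w huw _ ih =>
    have hblue : (u, a (some (C w))) ∈ liftedBlueSet S C a :=
      .inr ⟨by simp, by simpa using (C.valid huw).symm⟩
    refine .force _ _ (.init _ hblue) ⟨huw, by simp⟩ ?_
    rintro ⟨v, x⟩ ⟨huv : G.Adj u v, hx : a (some (C w)) ≠ x⟩ hne
    have hcolor : C v = C w := by
      rw [Bool.eq_not.mpr (C.valid huv).symm, Bool.eq_not.mpr (C.valid huw).symm]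
    rcases eq_or_ne x (a none) with rfl | hxo
    · exact ih v huv (by grind)
    · exact .init _ (.inr ⟨hxo, by simpa only [hcolor] using hx.symm⟩)

theorem SkewZFClosure.zfClosure_color_label {v : V} (hv : SkewZFClosure G S v)
    (hcommon : ∀ u, ZFClosure (tensorProd G (⊤ : SimpleGraph β)) (liftedBlueSet S C a)
      (u, a none)) :
    ZFClosure (tensorProd G (⊤ : SimpleGraph β)) (liftedBlueSet S C a) (v, a (some (C v))) := by
  induction hv with
  | init v hv => exact .init _ (.inl hv)
  | force u w huw _ ih =>
    refine .force _ _ (hcommon u) ⟨huw, by simp⟩ ?_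
    rintro ⟨v, x⟩ ⟨huv : G.Adj u v, hx : a none ≠ x⟩ hne
    rcases eq_or_ne x (a (some (C v))) with rfl | hxC
    · exact ih v huv (by grind)
    · exact .init _ (.inr ⟨hx.symm, hxC⟩)

theorem isZeroForcingSet_liftedBlueSet (hS : IsSkewZeroForcingSet G S) (C : G.Coloring Bool)
    (a : Option Bool ↪ β) :
    IsZeroForcingSet (tensorProd G (⊤ : SimpleGraph β)) (liftedBlueSet S C a) := by
  have hcommon (u : V) : ZFClosure (tensorProd G ⊤) (liftedBlueSet S C a) (u, a none) :=
    (hS u).zfClosure_common_label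
  rintro ⟨v, x⟩
  by_cases hx : x = a none ∨ x = a (some (C v))
  · rcases hx with rfl | rfl
    · exact hcommon v
    · exact (hS v).zfClosure_color_label hcommon
  · exact .init _ (.inr (not_or.mp hx))

variable [Fintype V] [Fintype β]

theorem ncard_liftedBlueSet (S : Finset V) (C : G.Coloring Bool) (a : Option Bool ↪ β) :
    (liftedBlueSet (S : Set V) C a).ncard =
      (Fintype.card β - 2) * Fintype.card V + 2 * S.card := by
  let white (q : V × Bool) : V × β := (q.1, a (if q.2 then some (C q.1) else none))
  have white_injective : Function.Injective white := by
    rintro ⟨v, b⟩ ⟨v', b'⟩ h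
    cases b <;> cases b' <;> simp_all [white]
  have compl_eq : (liftedBlueSet (S : Set V) C a)ᶜ = white '' ((S : Set V)ᶜ ×ˢ Set.univ) := by
    ext ⟨v, x⟩
    simp only [liftedBlueSet, white, Set.mem_compl_iff, Set.mem_image, Prod.exists,
      Bool.exists_bool]
    grind
  have ncard_compl : (liftedBlueSet (S : Set V) C a)ᶜ.ncard = (Fintype.card V - S.card) * 2 := by
    rw [compl_eq, Set.ncard_image_of_injective _ white_injective, Set.ncard_prod, Set.ncard_univ,
      Nat.card_eq_fintype_card, Fintype.card_bool, Set.ncard_compl, Set.ncard_coe_finset,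
      Nat.card_eq_fintype_card]
  have total := Set.ncard_add_ncard_compl (liftedBlueSet (S : Set V) C a)
  rw [ncard_compl, Nat.card_eq_fintype_card, Fintype.card_prod] at total
  have hS : S.card ≤ Fintype.card V := S.card_le_univ
  have hβ : 2 ≤ Fintype.card β := le_trans (by simp) (Fintype.card_le_of_embedding a)
  obtain ⟨k, hk⟩ := Nat.exists_eq_add_of_le' hβ
  rw [hk, mul_add, mul_comm _ k] at total
  rw [hk, Nat.add_sub_cancel]
  omega

theorem exists_card_eq_skewZeroForcingNumber (G : SimpleGraph V) :
    ∃ S : Finset V, S.card = skewZeroForcingNumber G ∧ IsSkewZeroForcingSet G (S : Set V) :=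
  Nat.sInf_mem (s := {k | ∃ S : Finset V, S.card = k ∧ IsSkewZeroForcingSet G (S : Set V)})
    ⟨_, Finset.univ, rfl, fun v ↦ .init v (by simp)⟩

theorem zeroForcingNumber_tensorProd_top_le (hG : G.IsBipartite) (hβ : 3 ≤ Fintype.card β) :
    zeroForcingNumber (tensorProd G (⊤ : SimpleGraph β)) ≤
      (Fintype.card β - 2) * Fintype.card V + 2 * skewZeroForcingNumber G := by
  classical
  obtain ⟨S, hcard, hS⟩ := exists_card_eq_skewZeroForcingNumber G
  let C : G.Coloring Bool := hG.toColoring (by simp)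
  obtain ⟨a⟩ : Nonempty (Option Bool ↪ β) := Function.Embedding.nonempty_of_card_le (by simpa)
  rw [← hcard, ← ncard_liftedBlueSet S C a, Set.ncard_eq_toFinset_card']
  exact Nat.sInf_le ⟨_, rfl, by simpa using isZeroForcingSet_liftedBlueSet hS C a⟩

end BipartiteUpperBound

theorem stmt2_general [Fintype V] [DecidableEq V] [Fintype β] [DecidableEq β] {G : SimpleGraph V}
    (hG : G.IsBipartite) (hskew : skewZeroForcingNumber G = 0) (hβ : 3 ≤ Fintype.card β) :
    maxNullity (tensorProd G (⊤ : SimpleGraph β)) = (Fintype.card β - 2) * Fintype.card V ∧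
    zeroForcingNumber (tensorProd G (⊤ : SimpleGraph β)) =
      (Fintype.card β - 2) * Fintype.card V := by
  have lower := le_maxNullity_tensorProd_top (β := β) G
  have middle := maxNullity_le_zeroForcingNumber (tensorProd G (⊤ : SimpleGraph β))
  have upper := zeroForcingNumber_tensorProd_top_le hG hβ
  rw [hskew, mul_zero, add_zero] at upper
  exact ⟨(middle.trans upper).antisymm lower, upper.antisymm (lower.trans middle)⟩

section EvenPath

variable {t : ℕ}

theorem isBipartite_pathGraph (t : ℕ) : (pathGraph t).IsBipartite :=
  (pathGraph.bicoloring t).colorable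

theorem skewZFClosure_pathGraph_of_odd (i : Fin t) (hi : Odd (i : ℕ)) :
    SkewZFClosure (pathGraph t) ∅ i := by
  have hpos : 0 < (i : ℕ) := hi.pos
  refine .force ⟨i - 1, by omega⟩ i (by rw [pathGraph_adj]; grind) fun j hj hji ↦ ?_
  rw [pathGraph_adj] at hj
  have hj2 : (j : ℕ) + 2 = i := by grind
  exact skewZFClosure_pathGraph_of_odd j (by grind)
termination_by (i : ℕ)

theorem skewZFClosure_pathGraph_of_even (ht : Even t) (i : Fin t) (hi : Even (i : ℕ)) :
    SkewZFClosure (pathGraph t) ∅ i := by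
  have hlt : (i : ℕ) + 1 < t := by grind
  refine .force ⟨i + 1, hlt⟩ i (by simp [pathGraph_adj]) fun j hj hji ↦ ?_
  rw [pathGraph_adj] at hj
  have hj2 : (j : ℕ) = i + 2 := by grind
  exact skewZFClosure_pathGraph_of_even ht j (by grind)
termination_by t - (i : ℕ)

theorem skewZeroForcingNumber_pathGraph (ht : Even t) :
    skewZeroForcingNumber (pathGraph t) = 0 := by
  refine Nat.sInf_eq_zero.mpr (.inl ⟨∅, Finset.card_empty, fun i ↦ ?_⟩)
  rw [Finset.coe_empty]
  exact (Nat.even_or_odd i).elim (skewZFClosure_pathGraph_of_even ht i)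
    (skewZFClosure_pathGraph_of_odd i)

end EvenPath

/-- If `t ≥ 2` is even and `n ≥ 3`, then
`M(P_t × K_n) = Z(P_t × K_n) = (n−2)t`. -/
theorem stmt2 (t n : ℕ) (ht : 2 ≤ t) (hte : Even t) (hn : 3 ≤ n) :
    maxNullity (tensorProd (pathGraph t) (⊤ : SimpleGraph (Fin n))) = (n - 2) * t ∧
    zeroForcingNumber (tensorProd (pathGraph t) (⊤ : SimpleGraph (Fin n))) = (n - 2) * t := by
  simpa using stmt2_general (isBipartite_pathGraph t) (skewZeroForcingNumber_pathGraph hte)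
    (β := Fin n) (by simpa using hn)

end PaperPD
end

section
/- If t ≥ 2 is even, then Z(P_t × K_3) ≤ t; explicitly, labeling the vertices of P_t × K_3 as pairs (r,s) with 1 ≤ r ≤ t and 1 ≤ s ≤ 3, the set B = { (2i−1,3), (2i,1) : 1 ≤ i ≤ t/2 } is a zero forcing set of P_t × K_3. -/
namespace PaperPD

open SimpleGraph

variable {V α β : Type*}

/-!
Let `C` be a proper colouring of `G` with colours `false`, `true`, let `S` be a skew zero forcing
set of `G`, and let `b`, `m false`, `m true` be three distinct columns of `G × K_n`. Over every
vertex `v ∉ S` leave white only the columns `b` and `m (C v)`. The vertices `(u, m (C w))`, for `u`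
coloured differently from `w`, start blue, and they let a skew force `u → w` in `G` be imitated by
`(u, m (C w)) → (w, b)`; this turns column `b` blue. The skew forces are then imitated a second time
by `(u, b) → (w, m (C w))`. For an even path, `∅` is a skew zero forcing set: in 0-indexed form, the
vertex `2i` forces `2i + 1`, from left to right, and `2i + 1` forces `2i`, from right to left.
-/

variable {W : Type*} {G : SimpleGraph V} {H : SimpleGraph W} {S : Set V} {C : G.Coloring Bool}
  {b : W} {m : Bool → W}

theorem zeroForcingNumber_le_ncard [Fintype V] {B : Set V} (hB : IsZeroForcingSet G B) :
    zeroForcingNumber G ≤ B.ncard := by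
  classical
  exact Nat.sInf_le ⟨B.toFinset, (Set.ncard_eq_toFinset_card' B).symm, by rwa [Set.coe_toFinset]⟩

theorem isSkewZeroForcingSet_of_rank {ι : Type*} [LT ι] [WellFoundedLT ι] (rank : V → ι)
    (h : ∀ v ∉ S, ∃ u, G.Adj u v ∧ ∀ x, G.Adj u x → x ≠ v → rank x < rank v) :
    IsSkewZeroForcingSet G S := by
  intro v
  induction v using WellFounded.induction (InvImage.wf rank wellFounded_lt) with
  | _ v ih =>
    by_cases hv : v ∈ S
    · exact .init v hv
    · obtain ⟨u, huv, hlt⟩ := h v hv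
      exact .force u v huv fun x hux hxv => ih x (hlt x hux hxv)

theorem isSkewZeroForcingSet_empty_pathGraph {t : ℕ} (ht : Even t) :
    IsSkewZeroForcingSet (pathGraph t) ∅ := by
  refine isSkewZeroForcingSet_of_rank
    (fun v => if Even v.val then t - v.val else v.val) fun v _ => ?_
  rcases Nat.even_or_odd v.val with hv | hv
  · have hlt : v.val + 1 < t := by grind
    refine ⟨⟨v + 1, hlt⟩, pathGraph_adj.2 (.inr rfl), fun x hx hxv => ?_⟩
    have hx' : x.val = v + 2 := by grind [pathGraph_adj]
    grind
  · have hpos : 0 < v.val := hv.pos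
    refine ⟨⟨v - 1, by omega⟩, pathGraph_adj.2 (.inl (by grind)), fun x hx hxv => ?_⟩
    have hx' : x.val + 2 = v := by grind [pathGraph_adj]
    grind

theorem ZFClosure.of_skewZFClosure {B : Set (V × W)} {i : Bool} {a c : W} (hac : H.Adj a c)
    (ha : ∀ u, C u ≠ i → ZFClosure (tensorProd G H) B (u, a))
    (hd : ∀ w, C w = i → ∀ d, H.Adj a d → d ≠ c → ZFClosure (tensorProd G H) B (w, d))
    (hS : ∀ w ∈ S, C w = i → ZFClosure (tensorProd G H) B (w, c))
    {w : V} (hw : SkewZFClosure G S w) (hwi : C w = i) :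
    ZFClosure (tensorProd G H) B (w, c) := by
  induction hw with
  | init w hw => exact hS w hw hwi
  | force u w huw _ ih =>
    have hui : C u ≠ i := hwi ▸ C.valid huw
    refine .force (u, a) (w, c) (ha u hui) ⟨huw, hac⟩ ?_
    rintro ⟨x, d⟩ ⟨hux, had⟩ hne
    have hxi : C x = i :=
      (Bool.eq_not.2 (C.valid hux).symm).trans (Bool.eq_not.2 hui.symm).symm
    by_cases hdc : d = c
    · subst hdc
      exact ih x hux (fun hxw => hne (by rw [hxw])) hxi
    · exact hd x hxi d had hdc

/-- The set of vertices of `G × K_W` left after removing, over each `v ∉ S`, the two columns `b` and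
`m (C v)`. It is the initial blue set that turns a skew zero forcing set `S` of a bipartite graph
`G` into a zero forcing set of the product. The two colour classes are encoded by a `Bool`-colouring
`C`, so that `m` names one column per class. -/
def puncturedFibers (S : Set V) (C : G.Coloring Bool) (b : W) (m : Bool → W) : Set (V × W) :=
  {p | p.1 ∈ S ∨ p.2 ≠ b ∧ p.2 ≠ m (C p.1)}

theorem isZeroForcingSet_puncturedFibers (hS : IsSkewZeroForcingSet G S)
    (hm : Function.Injective m) (hb : ∀ i, m i ≠ b) :
    IsZeroForcingSet (tensorProd G ⊤) (puncturedFibers S C b m) := by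
  have blue_of_ne (v : V) (d : W) (hdb : d ≠ b) (hdm : d ≠ m (C v)) :
      ZFClosure (tensorProd G ⊤) (puncturedFibers S C b m) (v, d) := .init _ (.inr ⟨hdb, hdm⟩)
  have blue_of_mem (v : V) (hv : v ∈ S) (d : W) :
      ZFClosure (tensorProd G ⊤) (puncturedFibers S C b m) (v, d) := .init _ (.inl hv)
  have column_b (w : V) : ZFClosure (tensorProd G ⊤) (puncturedFibers S C b m) (w, b) :=
    .of_skewZFClosure (hb (C w))
      (fun u hu => blue_of_ne u _ (hb _) (hm.ne hu.symm))
      (fun x hx d had hdb => blue_of_ne x d hdb (hx ▸ had.ne'))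
      (fun x hx _ => blue_of_mem x hx b) (hS w) rfl
  have column_m (w : V) : ZFClosure (tensorProd G ⊤) (puncturedFibers S C b m) (w, m (C w)) :=
    .of_skewZFClosure (hb (C w)).symm
      (fun u _ => column_b u)
      (fun x hx d had hdm => blue_of_ne x d had.ne' (hx ▸ hdm))
      (fun x hx _ => blue_of_mem x hx _) (hS w) rfl
  rintro ⟨v, d⟩
  by_cases hdb : d = b
  · exact hdb ▸ column_b v
  by_cases hdm : d = m (C v)
  · exact hdm ▸ column_m v
  · exact blue_of_ne v d hdb hdm

theorem compl_puncturedFibers :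
    (puncturedFibers S C b m)ᶜ = (fun v => (v, b)) '' Sᶜ ∪ (fun v => (v, m (C v))) '' Sᶜ := by
  ext ⟨v, d⟩
  simp only [puncturedFibers, Set.mem_compl_iff, Set.mem_ofPred_eq, Set.mem_union, Set.mem_image,
    Prod.mk.injEq]
  grind

theorem ncard_puncturedFibers [Fintype V] [Fintype W] (hb : ∀ i, m i ≠ b) :
    (puncturedFibers S C b m).ncard =
      Fintype.card V * (Fintype.card W - 2) + 2 * S.ncard := by
  have hcompl : (puncturedFibers S C b m)ᶜ.ncard = 2 * Sᶜ.ncard := by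
    have hdisj : Disjoint ((fun v => (v, b)) '' Sᶜ) ((fun v => (v, m (C v))) '' Sᶜ) := by
      rw [Set.disjoint_left]
      rintro _ ⟨v, _, rfl⟩ ⟨w, _, hw⟩
      exact hb (C w) (congrArg Prod.snd hw)
    rw [compl_puncturedFibers, Set.ncard_union_eq hdisj,
      Set.ncard_image_of_injective _ fun _ _ h => congrArg Prod.fst h,
      Set.ncard_image_of_injective _ fun _ _ h => congrArg Prod.fst h, two_mul]
  have hW : 2 ≤ Fintype.card W := Fintype.one_lt_card_iff.2 ⟨m true, b, hb true⟩
  have hprod := Set.ncard_add_ncard_compl (puncturedFibers S C b m)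
  have hV := Set.ncard_add_ncard_compl S
  rw [Nat.card_eq_fintype_card] at hprod hV
  rw [Fintype.card_prod, hcompl] at hprod
  obtain ⟨k, hk⟩ := Nat.exists_eq_add_of_le hW
  rw [hk] at hprod ⊢
  rw [Nat.add_sub_cancel_left]
  linarith

theorem stmt4_general [Fintype V] [Fintype W] (hS : IsSkewZeroForcingSet G S)
    (C : G.Coloring Bool) (b : W) (m : Bool → W) (hm : Function.Injective m) (hb : ∀ i, m i ≠ b) :
    IsZeroForcingSet (tensorProd G (⊤ : SimpleGraph W)) (puncturedFibers S C b m) ∧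
    zeroForcingNumber (tensorProd G (⊤ : SimpleGraph W)) ≤
      Fintype.card V * (Fintype.card W - 2) + 2 * S.ncard :=
  have hB := isZeroForcingSet_puncturedFibers hS hm hb
  ⟨hB, (zeroForcingNumber_le_ncard hB).trans_eq (ncard_puncturedFibers hb)⟩

theorem puncturedFibers_pathGraph (t : ℕ) :
    puncturedFibers ∅ (pathGraph.bicoloring t) (1 : Fin 3) (fun i => cond i 0 2) =
      {p | (Even p.1.val ∧ p.2.val = 2) ∨ (Odd p.1.val ∧ p.2.val = 0)} := by
  ext ⟨r, s⟩
  have hC : pathGraph.bicoloring t r = decide (r.val % 2 = 0) := rfl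
  rcases Nat.even_or_odd r.val with hr | hr <;> fin_cases s <;>
    simp_all [puncturedFibers, Nat.even_iff, Nat.odd_iff]

/-- For even `t ≥ 2`, the set `B = {(2i−1,3),(2i,1) : 1 ≤ i ≤ t/2}`
(1-indexed; here 0-indexed: even rows with column 2 and odd rows with column 0)
is a zero forcing set of `P_t × K_3`, so `Z(P_t × K₃) ≤ t`. -/
theorem stmt4 (t : ℕ) (ht : 2 ≤ t) (hte : Even t) :
    IsZeroForcingSet (tensorProd (pathGraph t) (⊤ : SimpleGraph (Fin 3)))
      {p : Fin t × Fin 3 | (Even p.1.val ∧ p.2.val = 2) ∨ (Odd p.1.val ∧ p.2.val = 0)} ∧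
    zeroForcingNumber (tensorProd (pathGraph t) (⊤ : SimpleGraph (Fin 3))) ≤ t := by
  simpa [puncturedFibers_pathGraph] using stmt4_general (isSkewZeroForcingSet_empty_pathGraph hte)
    (pathGraph.bicoloring t) (1 : Fin 3) (fun i => cond i 0 2) (by decide) (by decide)

end PaperPD
end

section
/- Let n ≥ 3 and t ≥ 3. Then γ_P(C_t × K_n) ≤ ⌈t/2⌉ if t ≢ 2 (mod 4), and γ_P(C_t × K_n) ≤ t/2 + 1 if t ≡ 2 (mod 4). -/
namespace PaperPD

open SimpleGraph

variable {V α β : Type*}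

/-!
Consider a product `G × H` in which `H` has a universal vertex `z`, as `C_t × K_n` does, and let
`D` be a total dominating set of `G`. The set `D × {z}` dominates every vertex outside the layer
`G × {z}`. Inside that layer, a vertex `(x, z)` can only be coloured from the dominated vertices
of the other layers; since those are coloured from the start, the forcing process on the layer
is exactly skew zero forcing on `G`. When `G` has maximum degree at most two, each vertex has a
neighbour in `D` and at most one other neighbour, which it forces. So `γ_P(G × H) ≤ γ_t(G)`, and
the total domination number of a cycle is bounded by choosing two out of every four consecutive
vertices.
-/

section Numbers

variable [Fintype V] {G : SimpleGraph V} {S : Finset V}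

theorem IsPowerDominatingSet.powerDominationNumber_le_card (hS : IsPowerDominatingSet G ↑S) :
    powerDominationNumber G ≤ S.card :=
  Nat.sInf_le ⟨S, rfl, hS⟩

theorem IsTotalDominatingSet.totalDominationNumber_le_card (hS : IsTotalDominatingSet G ↑S) :
    totalDominationNumber G ≤ S.card :=
  Nat.sInf_le ⟨S, rfl, hS⟩

theorem exists_isTotalDominatingSet_card_eq [G.LocallyFinite] (hG : ∀ v, 0 < G.degree v) :
    ∃ D : Finset V, D.card = totalDominationNumber G ∧ IsTotalDominatingSet G ↑D := by
  have hne : {k | ∃ D : Finset V, D.card = k ∧ IsTotalDominatingSet G ↑D}.Nonempty := by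
    refine ⟨_, Finset.univ, rfl, fun v ↦ ?_⟩
    obtain ⟨u, hu⟩ := (G.degree_pos_iff_exists_adj v).mp (hG v)
    exact ⟨u, Finset.mem_coe.mpr (Finset.mem_univ u), hu.symm⟩
  exact Nat.sInf_mem hne

end Numbers

theorem IsTotalDominatingSet.isSkewZeroForcingSet {G : SimpleGraph V} [G.LocallyFinite]
    {D : Set V} (hD : IsTotalDominatingSet G D) (hG : ∀ v, G.degree v ≤ 2) :
    IsSkewZeroForcingSet G D := by
  classical
  intro w
  obtain ⟨u, -, huw⟩ := hD w
  obtain ⟨d, hd, hdu⟩ := hD u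
  by_cases hwd : w = d
  · exact .init w (hwd ▸ hd)
  have hpair : {w, d} = G.neighborFinset u := by
    refine Finset.eq_of_subset_of_card_le ?_ ((hG u).trans_eq (Finset.card_pair hwd).symm)
    simp [Finset.insert_subset_iff, huw, hdu.symm]
  refine .force u w huw fun x hux hxw ↦ .init x ?_
  have hx : x ∈ ({w, d} : Finset V) := hpair ▸ (G.mem_neighborFinset u x).mpr hux
  obtain rfl : x = d := by simpa [hxw] using hx
  exact hd

section TensorProduct

variable {G : SimpleGraph α} {H : SimpleGraph β} {D : Set α} {z : β}

theorem IsTotalDominatingSet.mk_mem_closedNbhd_tensorProd (hD : IsTotalDominatingSet G D)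
    (hz : H.IsUniversal z) (v : α) {b : β} (hb : z ≠ b) :
    (v, b) ∈ closedNbhd (tensorProd G H) (D ×ˢ {z}) := by
  obtain ⟨u, hu, huv⟩ := hD v
  exact Or.inr ⟨(u, z), ⟨hu, rfl⟩, huv, hz hb⟩

theorem SkewZFClosure.zfClosure_tensorProd [Nontrivial β] (hD : IsTotalDominatingSet G D)
    (hz : H.IsUniversal z) {v : α} (hv : SkewZFClosure G D v) :
    ZFClosure (tensorProd G H) (closedNbhd (tensorProd G H) (D ×ˢ {z})) (v, z) := by
  induction hv with
  | init v hv => exact .init _ (Or.inl ⟨hv, rfl⟩)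
  | force u w huw _ ih =>
    obtain ⟨o, ho⟩ := exists_ne z
    refine .force (u, o) (w, z) (.init _ (hD.mk_mem_closedNbhd_tensorProd hz u ho.symm))
      ⟨huw, (hz ho.symm).symm⟩ ?_
    rintro ⟨x, b⟩ ⟨hux, -⟩ hne
    by_cases hb : z = b
    · subst hb
      exact ih x hux fun hxw ↦ hne (hxw ▸ rfl)
    · exact .init _ (hD.mk_mem_closedNbhd_tensorProd hz x hb)

theorem IsTotalDominatingSet.isPowerDominatingSet_tensorProd [Nontrivial β]
    (hD : IsTotalDominatingSet G D) (hskew : IsSkewZeroForcingSet G D) (hz : H.IsUniversal z) :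
    IsPowerDominatingSet (tensorProd G H) (D ×ˢ {z}) := by
  rintro ⟨v, b⟩
  by_cases hb : z = b
  · exact hb ▸ (hskew v).zfClosure_tensorProd hD hz
  · exact .init _ (hD.mk_mem_closedNbhd_tensorProd hz v hb)

theorem powerDominationNumber_tensorProd_le_totalDominationNumber [Fintype α] [Fintype β]
    [Nontrivial β] [G.LocallyFinite] (hpos : ∀ v, 0 < G.degree v) (hG : ∀ v, G.degree v ≤ 2)
    (hz : H.IsUniversal z) :
    powerDominationNumber (tensorProd G H) ≤ totalDominationNumber G := by
  obtain ⟨D, hcard, hD⟩ := exists_isTotalDominatingSet_card_eq hpos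
  have hS : IsPowerDominatingSet (tensorProd G H) ↑(D ×ˢ {z}) := by
    rw [Finset.coe_product, Finset.coe_singleton]
    exact hD.isPowerDominatingSet_tensorProd (hD.isSkewZeroForcingSet hG) hz
  calc powerDominationNumber (tensorProd G H)
      ≤ (D ×ˢ {z}).card := hS.powerDominationNumber_le_card
    _ = D.card := by rw [Finset.card_product, Finset.card_singleton, mul_one]
    _ = totalDominationNumber G := hcard

end TensorProduct

section Cycle

variable {t b : ℕ}

/-- The sequence `1, 2, 5, 6, 9, 10, …` of naturals congruent to `1` or `2` modulo `4`, indexed from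
`0`. Its initial segments, reduced modulo `t`, are small total dominating sets of `C_t`. -/
def pairedVertex (m : ℕ) : ℕ := 4 * (m / 2) + 1 + m % 2

theorem cycleGraph_adj_ofNat_succ [NeZero t] (ht : 2 ≤ t) (k : ℕ) :
    (cycleGraph t).Adj (Fin.ofNat t k) (Fin.ofNat t (k + 1)) := by
  obtain ⟨s, rfl⟩ := Nat.exists_eq_add_of_le' ht
  have hsucc : Fin.ofNat (s + 2) (k + 1) = Fin.ofNat (s + 2) k + 1 := by
    ext
    simp [Fin.val_add]
  exact cycleGraph_adj.mpr (Or.inr (by rw [hsucc, add_sub_cancel_left]))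

theorem exists_pairedVertex_eq_succ_or_succ_eq (hb : t ≤ 2 * b) (hb' : t % 4 = 2 → t < 2 * b)
    {v : ℕ} (hv : v < t) : ∃ m < b, pairedVertex m = v + 1 ∨ pairedVertex m + 1 = v := by
  -- For `q = v / 4`, term `2q` covers `4q` and `4q + 2`, and term `2q + 1` the other two residues.
  refine ⟨2 * (v / 4) + v % 2, ?_, ?_⟩
  · omega
  · unfold pairedVertex
    omega

theorem isTotalDominatingSet_image_pairedVertex [NeZero t] (ht : 2 ≤ t) (hb : t ≤ 2 * b)
    (hb' : t % 4 = 2 → t < 2 * b) :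
    IsTotalDominatingSet (cycleGraph t)
      ↑((Finset.range b).image fun m ↦ Fin.ofNat t (pairedVertex m)) := by
  intro v
  obtain ⟨m, hm, hmv⟩ := exists_pairedVertex_eq_succ_or_succ_eq hb hb' v.isLt
  refine ⟨Fin.ofNat t (pairedVertex m),
    Finset.mem_coe.mpr (Finset.mem_image_of_mem _ (Finset.mem_range.mpr hm)), ?_⟩
  rw [← Fin.ofNat_val_eq_self v]
  rcases hmv with hsucc | hsucc
  · rw [hsucc]
    exact (cycleGraph_adj_ofNat_succ ht v).symm
  · rw [← hsucc]
    exact cycleGraph_adj_ofNat_succ ht _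

theorem totalDominationNumber_cycleGraph_le (ht : 2 ≤ t) (hb : t ≤ 2 * b)
    (hb' : t % 4 = 2 → t < 2 * b) : totalDominationNumber (cycleGraph t) ≤ b := by
  have : NeZero t := ⟨by omega⟩
  calc totalDominationNumber (cycleGraph t)
      ≤ ((Finset.range b).image fun m ↦ Fin.ofNat t (pairedVertex m)).card :=
        (isTotalDominatingSet_image_pairedVertex ht hb hb').totalDominationNumber_le_card
    _ ≤ (Finset.range b).card := Finset.card_image_le
    _ = b := Finset.card_range b

theorem cycleGraph_degree_eq_two (ht : 3 ≤ t) (v : Fin t) : (cycleGraph t).degree v = 2 := by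
  obtain ⟨s, rfl⟩ := Nat.exists_eq_add_of_le' ht
  exact cycleGraph_degree_three_le

theorem stmt12_general [Fintype β] [Nontrivial β] {H : SimpleGraph β} {z : β}
    (hz : H.IsUniversal z) (ht : 3 ≤ t) :
    (t % 4 ≠ 2 → powerDominationNumber (tensorProd (cycleGraph t) H) ≤ (t + 1) / 2) ∧
    (t % 4 = 2 → powerDominationNumber (tensorProd (cycleGraph t) H) ≤ t / 2 + 1) := by
  have hdeg := cycleGraph_degree_eq_two ht
  have hle : powerDominationNumber (tensorProd (cycleGraph t) H) ≤
      totalDominationNumber (cycleGraph t) :=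
    powerDominationNumber_tensorProd_le_totalDominationNumber
      (fun v ↦ (hdeg v).symm ▸ Nat.two_pos) (fun v ↦ (hdeg v).le) hz
  exact ⟨fun _ ↦ hle.trans (totalDominationNumber_cycleGraph_le (by omega) (by omega) (by omega)),
    fun _ ↦ hle.trans (totalDominationNumber_cycleGraph_le (by omega) (by omega) (by omega))⟩

end Cycle

/-- For `n ≥ 3` and `t ≥ 3`, `γ_P(C_t × K_n) ≤ ⌈t/2⌉` if
`t ≢ 2 (mod 4)`, and `γ_P(C_t × K_n) ≤ t/2 + 1` if `t ≡ 2 (mod 4)`. -/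
theorem stmt12 (n t : ℕ) (hn : 3 ≤ n) (ht : 3 ≤ t) :
    (t % 4 ≠ 2 →
      powerDominationNumber (tensorProd (cycleGraph t) (⊤ : SimpleGraph (Fin n))) ≤ (t + 1) / 2) ∧
    (t % 4 = 2 →
      powerDominationNumber (tensorProd (cycleGraph t) (⊤ : SimpleGraph (Fin n))) ≤ t / 2 + 1) := by
  have : Nontrivial (Fin n) := Fin.nontrivial_iff_two_le.mpr (by omega)
  exact stmt12_general (z := ⟨0, by omega⟩) (fun _ h ↦ h) ht

end PaperPD
end
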